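/- (Ultra-Ellentuck theorem for FIN_{±k}^[∞].) Let 𝒰 be a cofinite subsymmetric ultrafilter on FIN_{±k} with 𝒰 + (−T)^j 𝒰 = (−T)^j 𝒰 + 𝒰 = 𝒰 for all j ≤ k. Then a set 𝒳 ⊆ FIN_{±k}^[∞] has the property of Baire relative to the 𝒰-topology if and only if 𝒳 is 𝒰-Ramsey; moreover, 𝒳 is meager with respect to the 𝒰-topology if and only if 𝒳 is 𝒰-Ramsey null. -/

import Mathlib

open Function Set

/-- `p` is an element of `FIN_{±k}`: finitely supported, values in `{0, ±1, …, ±k}`,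
attaining one of the values `±k`. -/
def IsFin (k : ℕ) (p : ℕ → ℤ) : Prop :=
  (Function.support p).Finite ∧ (∀ n, |p n| ≤ (k : ℤ)) ∧ (∃ n, |p n| = (k : ℤ))

/-- `p < q` in the block ordering: every point of `supp p` precedes every point of `supp q`. -/
def BlockLt (p q : ℕ → ℤ) : Prop :=
  ∀ m n : ℕ, p m ≠ 0 → q n ≠ 0 → m < n

/-- The tetris operation `T`. -/
def tetris (p : ℕ → ℤ) : ℕ → ℤ := fun n =>
  if 0 < p n then p n - 1 else if p n < 0 then p n + 1 else 0

/-- The sign-flipped tetris operation `-T`. -/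
def negT (p : ℕ → ℤ) : ℕ → ℤ := -(tetris p)

/-- The weak tetris operation `S`. -/
def Sop (p : ℕ → ℤ) : ℕ → ℤ := fun n => if |p n| = 1 then 0 else p n

/-- `‖p‖ ≤ c` for the `ℓ∞` norm. -/
def normLe (p : ℕ → ℤ) (c : ℕ) : Prop := ∀ n, |p n| ≤ (c : ℤ)

/-- `(A)_c`, the `c`-fattening of `A`. -/
def approx (c : ℕ) (A : Set (ℕ → ℤ)) : Set (ℕ → ℤ) :=
  {p | ∃ q ∈ A, normLe (p - q) c}

/-- `P` is an infinite block sequence in `FIN_{±k}`. -/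
def IsBlockSeq (k : ℕ) (P : ℕ → ℕ → ℤ) : Prop :=
  (∀ n, IsFin k (P n)) ∧ ∀ m n : ℕ, m < n → BlockLt (P m) (P n)

/-- `t` is a finite block sequence in `FIN_{±k}` (coded as a list). -/
def IsFinBlockSeq (k : ℕ) (t : List (ℕ → ℤ)) : Prop :=
  (∀ p ∈ t, IsFin k p) ∧ t.Pairwise BlockLt

/-- `q ∈ ⟨P⟩_{±k}`: `q = ε₀T^{j₀}(p_{n₀}) + ⋯ + ε_m T^{j_m}(p_{n_m})` with `n₀ < ⋯ < n_m`,
`εᵢ ∈ {±1}`, `jᵢ < k` and `min jᵢ = 0`. -/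
def InSpanPM (k : ℕ) (P : ℕ → ℕ → ℤ) (q : ℕ → ℤ) : Prop :=
  ∃ (m : ℕ) (n : Fin (m + 1) → ℕ) (ε : Fin (m + 1) → ℤ) (j : Fin (m + 1) → ℕ),
    StrictMono n ∧ (∀ i, ε i = 1 ∨ ε i = -1) ∧ (∀ i, j i < k) ∧ (∃ i, j i = 0) ∧
    q = ∑ i, ε i • tetris^[j i] (P (n i))

/-- `q ∈ ⟨P⟩_{(−T)}`. -/
def InSpanNegT (k : ℕ) (P : ℕ → ℕ → ℤ) (q : ℕ → ℤ) : Prop :=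
  ∃ (m : ℕ) (n : Fin (m + 1) → ℕ) (j : Fin (m + 1) → ℕ),
    StrictMono n ∧ (∀ i, j i < k) ∧ (∃ i, j i = 0) ∧
    q = ∑ i, negT^[j i] (P (n i))

/-- `q ∈ ⟨p_a, …, p_b⟩_{(−T)}`. -/
def InSpanNegTRange (k : ℕ) (P : ℕ → ℕ → ℤ) (a b : ℕ) (q : ℕ → ℤ) : Prop :=
  ∃ (m : ℕ) (n : Fin (m + 1) → ℕ) (j : Fin (m + 1) → ℕ),
    StrictMono n ∧ (∀ i, a ≤ n i ∧ n i ≤ b) ∧ (∀ i, j i < k) ∧ (∃ i, j i = 0) ∧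
    q = ∑ i, negT^[j i] (P (n i))

/-- A cofinite ultrafilter on `FIN_{±k}` (coded as an ultrafilter on `ℕ → ℤ`
concentrating on `FIN_{±k}`). -/
def IsCofiniteUF (k : ℕ) (𝒰 : Ultrafilter (ℕ → ℤ)) : Prop :=
  {p | IsFin k p} ∈ 𝒰 ∧ ∀ m : ℕ, {p : ℕ → ℤ | ∀ n < m, p n = 0} ∈ 𝒰

/-- `A ∈ 𝒰 + 𝒱`. -/
def SumMem (𝒰 𝒱 : Ultrafilter (ℕ → ℤ)) (A : Set (ℕ → ℤ)) : Prop :=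
  {p | {q | BlockLt p q ∧ p + q ∈ A} ∈ 𝒱} ∈ 𝒰

/-- `𝒰` is subsymmetric: `A ∈ 𝒰` implies `−(A)₁ ∈ 𝒰`. -/
def IsSubsymmetric (𝒰 : Ultrafilter (ℕ → ℤ)) : Prop :=
  ∀ A ∈ 𝒰, {p : ℕ → ℤ | -p ∈ approx 1 A} ∈ 𝒰

/-- `𝒰 + (−T)^j 𝒰 = (−T)^j 𝒰 + 𝒰 = 𝒰` for all `j ≤ k`. -/
def IsIdempotentUF (k : ℕ) (𝒰 : Ultrafilter (ℕ → ℤ)) : Prop :=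
  ∀ j ≤ k, ∀ A : Set (ℕ → ℤ),
    (SumMem 𝒰 (Ultrafilter.map (negT^[j]) 𝒰) A ↔ A ∈ 𝒰) ∧
    (SumMem (Ultrafilter.map (negT^[j]) 𝒰) 𝒰 A ↔ A ∈ 𝒰)

/-- A cofinite subsymmetric ultrafilter on `FIN_{±k}` idempotent with respect to
all the maps `(−T)^j`, `j ≤ k`. -/
def IsGowersUF (k : ℕ) (𝒰 : Ultrafilter (ℕ → ℤ)) : Prop :=
  IsCofiniteUF k 𝒰 ∧ IsSubsymmetric 𝒰 ∧ IsIdempotentUF k 𝒰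

/-- A `𝒰`-tree on `FIN_{±k}` with stem `s`. -/
structure IsUTree (k : ℕ) (𝒰 : Ultrafilter (ℕ → ℤ)) (U : Set (List (ℕ → ℤ)))
    (s : List (ℕ → ℤ)) : Prop where
  blocks : ∀ t ∈ U, IsFinBlockSeq k t
  prefixClosed : ∀ t ∈ U, ∀ t' : List (ℕ → ℤ), t' <+: t → t' ∈ U
  stemMem : s ∈ U
  stemComparable : ∀ t ∈ U, s <+: t ∨ t <+: s
  branch : ∀ t ∈ U, s <+: t → {p | t ++ [p] ∈ U} ∈ 𝒰

/-- `[U]`, the set of infinite branches of a tree of finite block sequences. -/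
def Branches (U : Set (List (ℕ → ℤ))) : Set (ℕ → ℕ → ℤ) :=
  {P | ∀ n : ℕ, (List.ofFn fun i : Fin n => P i.1) ∈ U}

/-- The space `FIN_{±k}^[∞]` of infinite block sequences. -/
def BlockSeq (k : ℕ) : Type := {P : ℕ → ℕ → ℤ // IsBlockSeq k P}

/-- The metrizable topology on `FIN_{±k}^[∞]`, generated by the basic sets `[s]`. -/
instance BlockSeq.topology (k : ℕ) : TopologicalSpace (BlockSeq k) :=
  TopologicalSpace.generateFrom
    {O | ∃ s : List (ℕ → ℤ),
      O = {P : BlockSeq k | ∀ i : Fin s.length, P.1 i.1 = s.get i}}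

/-- The Souslin operation applied to a Souslin scheme. -/
def SouslinOp {α : Type*} (F : List ℕ → Set α) : Set α :=
  ⋃ x : ℕ → ℕ, ⋂ n : ℕ, F (List.ofFn fun i : Fin n => x i.1)

/-- `A` is Souslin measurable: it belongs to every field of sets containing the open
sets and closed under the Souslin operation. -/
def SouslinMeasurable {α : Type*} [TopologicalSpace α] (A : Set α) : Prop :=
  ∀ 𝓕 : Set (Set α),
    (∀ O : Set α, IsOpen O → O ∈ 𝓕) →
    (∀ B ∈ 𝓕, Bᶜ ∈ 𝓕) →
    (∀ B ∈ 𝓕, ∀ C ∈ 𝓕, B ∪ C ∈ 𝓕) →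
    (∀ F : List ℕ → Set α, (∀ s, F s ∈ 𝓕) → SouslinOp F ∈ 𝓕) →
    A ∈ 𝓕

/-- The map `Φ_m : FIN_{±2m} → FIN_{±m}` (its defining formula does not depend on `m`). -/
def Phi (p : ℕ → ℤ) : ℕ → ℤ := fun n =>
  if p n % 2 = 0 then p n / 2
  else if 0 < p n then (p n - 1) / 2
  else (p n + 1) / 2

/-- `Ψ = Φ_k ∘ Φ_{2k} : FIN_{±4k} → FIN_{±k}`. -/
def Psi (p : ℕ → ℤ) : ℕ → ℤ := Phi (Phi p)

/-- The `𝒰`-topology on `FIN_{±k}^[∞]`, generated by the sets `[U]` for `𝒰`-trees `U`. -/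
def uTop (k : ℕ) (𝒰 : Ultrafilter (ℕ → ℤ)) : TopologicalSpace (BlockSeq k) :=
  TopologicalSpace.generateFrom
    {O | ∃ (U : Set (List (ℕ → ℤ))) (s : List (ℕ → ℤ)), IsUTree k 𝒰 U s ∧
      O = {P : BlockSeq k | P.1 ∈ Branches U}}

/-- `[U]` viewed as a set of points of the space `FIN_{±k}^[∞]`. -/
def BranchesB (k : ℕ) (U : Set (List (ℕ → ℤ))) : Set (BlockSeq k) :=
  {P | P.1 ∈ Branches U}

/-- `𝒳` is `𝒰`-Ramsey. -/
def URamsey (k : ℕ) (𝒰 : Ultrafilter (ℕ → ℤ)) (𝒳 : Set (BlockSeq k)) : Prop :=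
  ∀ (U : Set (List (ℕ → ℤ))) (s : List (ℕ → ℤ)), IsUTree k 𝒰 U s →
    ∃ U' : Set (List (ℕ → ℤ)), U' ⊆ U ∧ IsUTree k 𝒰 U' s ∧
      (BranchesB k U' ⊆ 𝒳 ∨ BranchesB k U' ⊆ 𝒳ᶜ)

/-- `𝒳` is `𝒰`-Ramsey null. -/
def URamseyNull (k : ℕ) (𝒰 : Ultrafilter (ℕ → ℤ)) (𝒳 : Set (BlockSeq k)) : Prop :=
  ∀ (U : Set (List (ℕ → ℤ))) (s : List (ℕ → ℤ)), IsUTree k 𝒰 U s →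
    ∃ U' : Set (List (ℕ → ℤ)), U' ⊆ U ∧ IsUTree k 𝒰 U' s ∧ BranchesB k U' ⊆ 𝒳ᶜ

namespace UE

abbrev pre (P : ℕ → ℕ → ℤ) (n : ℕ) : List (ℕ → ℤ) := List.ofFn fun i : Fin n => P i.1

theorem pre_length (P : ℕ → ℕ → ℤ) (n : ℕ) : (pre P n).length = n := by simp [pre]

theorem pre_take (P : ℕ → ℕ → ℤ) {n m : ℕ} (h : n ≤ m) : (pre P m).take n = pre P n := by
  apply List.ext_getElem
  · simp [pre, h]
  · intro i h1 h2
    simp [pre]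

theorem pre_prefix (P : ℕ → ℕ → ℤ) {n m : ℕ} (h : n ≤ m) : pre P n <+: pre P m := by
  rw [← pre_take P h]; exact List.take_prefix _ _

variable {k : ℕ} {𝒰 : Ultrafilter (ℕ → ℤ)} {U V : Set (List (ℕ → ℤ))}
  {s r : List (ℕ → ℤ)}

theorem pre_stem (hU : IsUTree k 𝒰 U s) {P : ℕ → ℕ → ℤ} (hP : P ∈ Branches U) :
    pre P s.length = s := by
  rcases hU.stemComparable _ (hP s.length) with h | h
  · exact (h.eq_of_length (by simp)).symm
  · exact h.eq_of_length (by simp)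

theorem branches_of_ge (hU : IsUTree k 𝒰 U s) {P : ℕ → ℕ → ℤ} (N : ℕ)
    (h : ∀ n, N ≤ n → pre P n ∈ U) : P ∈ Branches U := by
  intro n
  exact hU.prefixClosed _ (h (max N n) (le_max_left _ _)) _ (pre_prefix P (le_max_right _ _))

theorem branches_blockSeq (hU : IsUTree k 𝒰 U s) {P : ℕ → ℕ → ℤ} (hP : P ∈ Branches U) :
    IsBlockSeq k P := by
  constructor
  · intro n
    refine (hU.blocks _ (hP (n + 1))).1 _ ?_
    rw [List.mem_ofFn]
    exact ⟨⟨n, by omega⟩, rfl⟩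
  · intro m n hmn
    have h := (hU.blocks _ (hP (n + 1))).2
    rw [List.pairwise_ofFn] at h
    exact @h ⟨m, by omega⟩ ⟨n, by omega⟩ (by simpa using hmn)

theorem prefix_concat {r t : List (ℕ → ℤ)} {p : ℕ → ℤ} (h : r <+: t ++ [p]) :
    r = t ++ [p] ∨ r <+: t := by
  simpa using List.prefix_concat_iff.1 h

theorem diag (hU : IsUTree k 𝒰 U s) (Q : List (ℕ → ℤ) → List (ℕ → ℤ) → Prop)
    (h0 : Q s s)
    (hpre : ∀ r t t', s <+: r → r <+: t' → t' <+: t → Q r t → Q r t')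
    (hbr : ∀ t ∈ U, s <+: t → ∀ r, s <+: r → r <+: t → Q r t → {p | Q r (t ++ [p])} ∈ 𝒰)
    (hnew : ∀ t ∈ U, s <+: t → Q t t → {p | t ++ [p] ∈ U → Q (t ++ [p]) (t ++ [p])} ∈ 𝒰) :
    IsUTree k 𝒰 {t | t ∈ U ∧ ∀ r, s <+: r → r <+: t → Q r t} s where
  blocks := fun t ht => hU.blocks t ht.1
  prefixClosed := fun t ht t' h' => ⟨hU.prefixClosed t ht.1 t' h', fun r h1 h2 =>
    hpre r t t' h1 h2 h' (ht.2 r h1 (h2.trans h'))⟩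
  stemMem := ⟨hU.stemMem, fun r h1 h2 => by
    have : s = r := h1.eq_of_length (le_antisymm h1.length_le h2.length_le)
    subst this; exact h0⟩
  stemComparable := fun t ht => hU.stemComparable t ht.1
  branch := by
    rintro t ⟨htU, ht⟩ hst
    have h1 := hU.branch t htU hst
    have h2 := hnew t htU hst (ht t hst List.prefix_rfl)
    have h3 : (⋂ r ∈ {r | r <+: t}, {p | s <+: r → Q r (t ++ [p])}) ∈ (𝒰 : Filter (ℕ → ℤ)) := by
      have hfin : {r | r <+: t}.Finite := by
        refine (List.finite_toSet t.inits).subset ?_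
        intro r hr
        simpa using hr
      rw [Filter.biInter_mem hfin]
      intro r hr
      by_cases hs : s <+: r
      · filter_upwards [hbr t htU hst r hs hr (ht r hs hr)] with p hp _ using hp
      · simp [hs]
    change _ ∈ (𝒰 : Filter (ℕ → ℤ))
    filter_upwards [h1, h2, h3] with p hp1 hp2 hp3
    refine ⟨hp1, fun r hr1 hr2 => ?_⟩
    rcases prefix_concat hr2 with rfl | h
    · exact hp2 hp1
    · simp only [mem_iInter] at hp3
      exact hp3 r h hr1

def restr (U : Set (List (ℕ → ℤ))) (r : List (ℕ → ℤ)) : Set (List (ℕ → ℤ)) :=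
  {t | t ∈ U ∧ (r <+: t ∨ t <+: r)}

theorem restr_tree (hU : IsUTree k 𝒰 U s) (hr : r ∈ U) (hs : s <+: r) :
    IsUTree k 𝒰 (restr U r) r where
  blocks := fun t ht => hU.blocks t ht.1
  prefixClosed := fun t ht t' h' => ⟨hU.prefixClosed t ht.1 t' h', by
    rcases ht.2 with h | h
    · exact List.prefix_or_prefix_of_prefix h h'
    · exact Or.inr (h'.trans h)⟩
  stemMem := ⟨hr, Or.inl List.prefix_rfl⟩
  stemComparable := fun t ht => ht.2
  branch := fun t ht hrt => by
    change _ ∈ (𝒰 : Filter (ℕ → ℤ))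
    filter_upwards [hU.branch t ht.1 (hs.trans hrt)] with p hp
    exact ⟨hp, Or.inl (hrt.trans (List.prefix_append _ _))⟩

theorem inter_tree (hU : IsUTree k 𝒰 U s) (hV : IsUTree k 𝒰 V s) :
    IsUTree k 𝒰 (U ∩ V) s where
  blocks := fun t ht => hU.blocks t ht.1
  prefixClosed := fun t ht t' h' => ⟨hU.prefixClosed t ht.1 t' h', hV.prefixClosed t ht.2 t' h'⟩
  stemMem := ⟨hU.stemMem, hV.stemMem⟩
  stemComparable := fun t ht => hU.stemComparable t ht.1
  branch := fun t ht hrt => by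
    change _ ∈ (𝒰 : Filter (ℕ → ℤ))
    filter_upwards [hU.branch t ht.1 hrt, hV.branch t ht.2 hrt] with p hp hp'
    exact ⟨hp, hp'⟩

theorem branches_restr {P : ℕ → ℕ → ℤ} (hP : P ∈ Branches U) (N : ℕ) :
    P ∈ Branches (restr U (pre P N)) := by
  intro n
  refine ⟨hP n, ?_⟩
  rcases le_total N n with h | h
  · exact Or.inl (pre_prefix P h)
  · exact Or.inr (pre_prefix P h)

theorem restr_pre_tree (hU : IsUTree k 𝒰 U s) {P : ℕ → ℕ → ℤ} (hP : P ∈ Branches U) {N : ℕ}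
    (hN : s.length ≤ N) : IsUTree k 𝒰 (restr U (pre P N)) (pre P N) := by
  refine restr_tree hU (hP N) ?_
  have := pre_prefix P hN
  rwa [pre_stem hU hP] at this

theorem branches_mono (h : U ⊆ V) : BranchesB k U ⊆ BranchesB k V :=
  fun _ hP n => h (hP n)

theorem branches_nonempty (hU : IsUTree k 𝒰 U s) : (BranchesB k U).Nonempty := by
  have step : ∀ t : {t // t ∈ U ∧ s <+: t}, ∃ t' : {t // t ∈ U ∧ s <+: t}, ∃ p,
      t'.1 = t.1 ++ [p] := by
    rintro ⟨t, h1, h2⟩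
    obtain ⟨p, hp⟩ := 𝒰.nonempty_of_mem (hU.branch t h1 h2)
    exact ⟨⟨t ++ [p], hp, h2.trans (List.prefix_append _ _)⟩, p, rfl⟩
  choose f g hfg using step
  let T : ℕ → {t // t ∈ U ∧ s <+: t} := fun n => f^[n] ⟨s, hU.stemMem, List.prefix_rfl⟩
  have hT : ∀ n, (T (n + 1)).1 = (T n).1 ++ [g (T n)] := by
    intro n
    simp only [T, Function.iterate_succ_apply']
    exact hfg _
  have hlen : ∀ n, (T n).1.length = s.length + n := by
    intro n
    induction n with
    | zero => rfl
    | succ n ih => rw [hT, List.length_append, ih]; simp; omega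
  have hmono : ∀ n m, n ≤ m → (T n).1 <+: (T m).1 := by
    intro n m h
    induction m, h using Nat.le_induction with
    | base => exact List.prefix_rfl
    | succ m _ ih => rw [hT]; exact ih.trans (List.prefix_append _ _)
  let P : ℕ → ℕ → ℤ := fun i => (T (i + 1)).1.getD i 0
  have hP : P ∈ Branches U := by
    intro n
    refine hU.prefixClosed _ (T n).2.1 _ ?_
    have : pre P n = (T n).1.take n := by
      apply List.ext_getElem
      · simp [hlen]
      · intro i h1 h2
        have hi : i < n := by simpa using h1
        have hl : i < (T (i + 1)).1.length := by rw [hlen]; omega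
        have e := (hmono (i + 1) n hi).getElem hl
        simp only [pre, List.getElem_ofFn, List.getElem_take, P]
        rw [← e, List.getD_eq_getElem _ _ hl]
    change pre P n <+: _
    rw [this]
    exact List.take_prefix _ _
  exact ⟨⟨P, branches_blockSeq hU hP⟩, hP⟩

theorem full_tree (h𝒰 : IsCofiniteUF k 𝒰) : IsUTree k 𝒰 {t | IsFinBlockSeq k t} [] where
  blocks := fun t ht => ht
  prefixClosed := fun t ht t' h' => ⟨fun p hp => ht.1 p (h'.subset hp), ht.2.sublist h'.sublist⟩
  stemMem := ⟨by simp, by simp⟩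
  stemComparable := fun t _ => Or.inl (List.nil_prefix)
  branch := fun t ht _ => by
    have hfin : (⋃ p ∈ {p | p ∈ t}, Function.support p).Finite :=
      (List.finite_toSet t).biUnion fun p hp => (ht.1 p hp).1
    obtain ⟨M, hM⟩ := hfin.bddAbove
    change _ ∈ (𝒰 : Filter (ℕ → ℤ))
    filter_upwards [h𝒰.1, h𝒰.2 (M + 1)] with q hq1 hq2
    refine ⟨?_, ?_⟩
    · intro p hp
      rcases List.mem_append.1 hp with h | h
      · exact ht.1 p h
      · rw [List.mem_singleton.1 h]; exact hq1
    · rw [List.pairwise_append]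
      refine ⟨ht.2, by simp, ?_⟩
      intro p hp q' hq' m n hm hn
      rw [List.mem_singleton.1 hq'] at hn
      have h1 : m ≤ M := hM (by
        simp only [mem_iUnion]
        exact ⟨p, hp, hm⟩)
      by_contra hlt
      exact hn (hq2 n (by omega))

theorem open_iff (h𝒰 : IsCofiniteUF k 𝒰) (O : Set (BlockSeq k)) (hO : @IsOpen _ (uTop k 𝒰) O) :
    ∀ P ∈ O, ∃ U s, IsUTree k 𝒰 U s ∧ P ∈ BranchesB k U ∧ BranchesB k U ⊆ O := by
  change TopologicalSpace.GenerateOpen _ O at hO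
  induction hO with
  | basic O h =>
    obtain ⟨U, s, hU, rfl⟩ := h
    exact fun P hP => ⟨U, s, hU, hP, subset_rfl⟩
  | univ =>
    intro P _
    refine ⟨_, _, full_tree h𝒰, ?_, subset_univ _⟩
    intro n
    refine ⟨?_, ?_⟩
    · intro p hp
      obtain ⟨i, rfl⟩ := (List.mem_ofFn).1 hp
      exact P.2.1 _
    · rw [List.pairwise_ofFn]
      intro i j hij
      exact P.2.2 _ _ hij
  | inter A B _ _ ihA ihB =>
    rintro P ⟨hA, hB⟩
    obtain ⟨U, s, hU, hPU, hUA⟩ := ihA P hA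
    obtain ⟨V, s', hV, hPV, hVB⟩ := ihB P hB
    refine ⟨_, _, inter_tree (restr_pre_tree hU hPU (le_max_left s.length s'.length))
      (restr_pre_tree hV hPV (le_max_right s.length s'.length)),
      fun n => ⟨branches_restr hPU _ n, branches_restr hPV _ n⟩, ?_⟩
    exact fun R hR => ⟨hUA fun n => (hR n).1.1, hVB fun n => (hR n).2.1⟩
  | sUnion S _ ih =>
    rintro P ⟨A, hA, hP⟩
    obtain ⟨U, s, hU, hPU, hUA⟩ := ih A hA P hP
    exact ⟨U, s, hU, hPU, hUA.trans (subset_sUnion_of_mem hA)⟩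

theorem isOpen_branches (hU : IsUTree k 𝒰 U s) : @IsOpen _ (uTop k 𝒰) (BranchesB k U) :=
  TopologicalSpace.GenerateOpen.basic _ ⟨U, s, hU, rfl⟩

theorem glue (hU : IsUTree k 𝒰 U s) (O : Set (BlockSeq k))
    (h : {p | ∃ V ⊆ U, IsUTree k 𝒰 V (s ++ [p]) ∧ BranchesB k V ⊆ O} ∈ 𝒰) :
    ∃ V ⊆ U, IsUTree k 𝒰 V s ∧ BranchesB k V ⊆ O := by
  classical
  let G : List (ℕ → ℤ) → Prop := fun r => ∃ V ⊆ U, IsUTree k 𝒰 V r ∧ BranchesB k V ⊆ O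
  have hch : ∀ r, ∃ V, G r → V ⊆ U ∧ IsUTree k 𝒰 V r ∧ BranchesB k V ⊆ O := by
    intro r
    by_cases hr : G r
    · obtain ⟨V, hV⟩ := hr
      exact ⟨V, fun _ => hV⟩
    · exact ⟨∅, fun h => absurd h hr⟩
  choose V hV using hch
  have key := diag hU (fun r t => r.length = s.length + 1 → G r ∧ t ∈ V r)
    (by intro h; omega)
    (by
      intro r t t' _ _ h3 h4 h5
      obtain ⟨h6, h7⟩ := h4 h5
      exact ⟨h6, (hV r h6).2.1.prefixClosed _ h7 _ h3⟩)
    (by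
      intro t _ _ r _ hrt hQ
      change _ ∈ (𝒰 : Filter (ℕ → ℤ))
      by_cases hl : r.length = s.length + 1
      · obtain ⟨h6, h7⟩ := hQ hl
        filter_upwards [(hV r h6).2.1.branch t h7 hrt] with p hp _
        exact ⟨h6, hp⟩
      · simp [hl])
    (by
      intro t _ hst _
      change _ ∈ (𝒰 : Filter (ℕ → ℤ))
      filter_upwards [h] with p hp _ hl
      have : s = t := hst.eq_of_length (by simp at hl; omega)
      subst this
      exact ⟨hp, (hV _ hp).2.1.stemMem⟩)
  refine ⟨_, fun t ht => ht.1, key, ?_⟩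
  intro P hP
  have hs : s <+: pre P.1 (s.length + 1) := by
    have := pre_prefix P.1 (Nat.le_succ s.length)
    rwa [pre_stem key hP] at this
  have hG : ∀ n, s.length + 1 ≤ n → G (pre P.1 (s.length + 1)) ∧ pre P.1 n ∈ V (pre P.1 (s.length + 1)) :=
    fun n hn => (hP n).2 _ hs (pre_prefix P.1 hn) (pre_length _ _)
  have hg := (hG _ le_rfl).1
  exact (hV _ hg).2.2 (branches_of_ge (hV _ hg).2.1 _ fun n hn => (hG n hn).2)

theorem open_ramsey (h𝒰 : IsCofiniteUF k 𝒰) (O : Set (BlockSeq k))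
    (hO : @IsOpen _ (uTop k 𝒰) O) : URamsey k 𝒰 O := by
  intro U s hU
  let G : List (ℕ → ℤ) → Prop := fun r => ∃ V ⊆ U, IsUTree k 𝒰 V r ∧ BranchesB k V ⊆ O
  by_cases hG : G s
  · obtain ⟨V, h1, h2, h3⟩ := hG
    exact ⟨V, h1, h2, Or.inl h3⟩
  have key := diag hU (fun r _ => ¬ G r) hG (fun r t t' _ _ _ h => h)
    (by
      intro t _ _ r _ _ h
      change _ ∈ (𝒰 : Filter (ℕ → ℤ))
      simp [h])
    (by
      intro t ht hst hGt
      by_contra hcon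
      apply hGt
      have hB : {p | ∃ V ⊆ restr U t, IsUTree k 𝒰 V (t ++ [p]) ∧ BranchesB k V ⊆ O} ∈ 𝒰 := by
        rw [← Ultrafilter.compl_mem_iff_notMem] at hcon
        change _ ∈ (𝒰 : Filter (ℕ → ℤ))
        filter_upwards [hcon] with p hp
        simp only [mem_compl_iff, mem_setOf_eq, Classical.not_imp, not_not] at hp
        obtain ⟨_, V, h1, h2, h3⟩ := hp
        refine ⟨V, fun r hr => ⟨h1 hr, ?_⟩, h2, h3⟩
        rcases h2.stemComparable r hr with h | h
        · exact Or.inl ((List.prefix_append _ _).trans h)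
        · exact List.prefix_or_prefix_of_prefix (List.prefix_append _ _) h
      obtain ⟨V, h1, h2, h3⟩ := glue (restr_tree hU ht hst) O hB
      exact ⟨V, h1.trans fun r hr => hr.1, h2, h3⟩)
  refine ⟨_, fun t ht => ht.1, key, Or.inr ?_⟩
  intro P hP hPO
  obtain ⟨V, s', hV, hPV, hVO⟩ := open_iff h𝒰 O hO P hPO
  have hPU : P.1 ∈ Branches U := fun n => (hP n).1
  have hs : s <+: pre P.1 (max s.length s'.length) := by
    have := pre_prefix P.1 (le_max_left s.length s'.length)
    rwa [pre_stem hU hPU] at this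
  refine (hP (max s.length s'.length)).2 _ hs List.prefix_rfl ?_
  exact ⟨_, fun r hr => hr.1.1, inter_tree (restr_pre_tree hU hPU (le_max_left s.length s'.length))
      (restr_pre_tree hV hPV (le_max_right s.length s'.length)),
      fun R hR => hVO fun n => (hR n).2.1⟩

theorem null_iUnion (X : ℕ → Set (BlockSeq k)) (hX : ∀ n, URamseyNull k 𝒰 (X n)) :
    URamseyNull k 𝒰 (⋃ n, X n) := by
  intro U s hU
  have hch : ∀ r, ∃ W, r ∈ U → s <+: r →
      IsUTree k 𝒰 W r ∧ BranchesB k W ⊆ (X (r.length - s.length))ᶜ := by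
    intro r
    by_cases hr : r ∈ U ∧ s <+: r
    · obtain ⟨W, _, h2, h3⟩ := hX (r.length - s.length) _ _ (restr_tree hU hr.1 hr.2)
      exact ⟨W, fun _ _ => ⟨h2, h3⟩⟩
    · exact ⟨∅, fun h1 h2 => absurd ⟨h1, h2⟩ hr⟩
  choose W hW using hch
  have key := diag hU (fun r t => r ∈ U → t ∈ W r)
    (fun h => (hW s h List.prefix_rfl).1.stemMem)
    (fun r t t' h1 _ h3 h4 hr => (hW r hr h1).1.prefixClosed _ (h4 hr) _ h3)
    (by
      intro t ht _ r hsr hrt h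
      have hr := hU.prefixClosed t ht r hrt
      change _ ∈ (𝒰 : Filter (ℕ → ℤ))
      filter_upwards [(hW r hr hsr).1.branch t (h hr) hrt] with p hp _
      exact hp)
    (by
      intro t ht hst _
      change _ ∈ (𝒰 : Filter (ℕ → ℤ))
      refine Filter.Eventually.of_forall ?_
      intro p _ hp
      exact (hW _ hp (hst.trans (List.prefix_append _ _))).1.stemMem)
  refine ⟨_, fun t ht => ht.1, key, ?_⟩
  intro P hP hPX
  obtain ⟨n, hn⟩ := mem_iUnion.1 hPX
  have hPU : P.1 ∈ Branches U := fun n => (hP n).1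
  have hs : s <+: pre P.1 (s.length + n) := by
    have := pre_prefix P.1 (Nat.le_add_right s.length n)
    rwa [pre_stem hU hPU] at this
  have hw := hW _ (hPU (s.length + n)) hs
  refine hw.2 (branches_of_ge hw.1 (s.length + n) fun m hm => (hP m).2 _ hs (pre_prefix P.1 hm)
    (hPU _)) ?_
  rw [pre_length, Nat.add_sub_cancel_left]
  exact hn

theorem null_mono {X Y : Set (BlockSeq k)} (h : X ⊆ Y) (hY : URamseyNull k 𝒰 Y) :
    URamseyNull k 𝒰 X := by
  intro U s hU
  obtain ⟨V, h1, h2, h3⟩ := hY U s hU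
  exact ⟨V, h1, h2, h3.trans (compl_subset_compl.2 h)⟩

theorem nowhereDense_null (h𝒰 : IsCofiniteUF k 𝒰) (X : Set (BlockSeq k))
    (hX : @IsNowhereDense _ (uTop k 𝒰) X) : URamseyNull k 𝒰 X := by
  letI := uTop k 𝒰
  intro U s hU
  have ho : IsOpen (closure X)ᶜ := isClosed_closure.isOpen_compl
  obtain ⟨V, h1, h2, h3⟩ := open_ramsey h𝒰 _ ho U s hU
  refine ⟨V, h1, h2, ?_⟩
  rcases h3 with h3 | h3
  · exact h3.trans (compl_subset_compl.2 subset_closure)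
  · rw [compl_compl] at h3
    have h4 : BranchesB k V ⊆ interior (closure X) := interior_maximal h3 (isOpen_branches h2)
    have h5 : interior (closure X) = ∅ := hX
    rw [h5] at h4
    obtain ⟨P, hP⟩ := branches_nonempty h2
    exact absurd (h4 hP) (notMem_empty _)

theorem null_nowhereDense (h𝒰 : IsCofiniteUF k 𝒰) (X : Set (BlockSeq k))
    (hX : URamseyNull k 𝒰 X) : @IsNowhereDense _ (uTop k 𝒰) X := by
  letI := uTop k 𝒰
  change interior (closure X) = ∅
  rw [eq_empty_iff_forall_notMem]
  intro P hP
  obtain ⟨U, s, hU, _, hUO⟩ := open_iff h𝒰 _ isOpen_interior P hP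
  obtain ⟨V, h1, h2, h3⟩ := hX U s hU
  obtain ⟨R, hR⟩ := branches_nonempty h2
  have hRc : R ∈ closure X := interior_subset (hUO (branches_mono h1 hR))
  obtain ⟨R', h4, h5⟩ := mem_closure_iff.1 hRc _ (isOpen_branches h2) hR
  exact h3 h4 h5

theorem meagre_iff (h𝒰 : IsCofiniteUF k 𝒰) (X : Set (BlockSeq k)) :
    @IsMeagre _ (uTop k 𝒰) X ↔ URamseyNull k 𝒰 X := by
  letI := uTop k 𝒰
  constructor
  · intro h
    obtain ⟨S, hS, hc, hXS⟩ := isMeagre_iff_countable_union_isNowhereDense.1 h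
    rcases S.eq_empty_or_nonempty with rfl | hne
    · have : X ⊆ ∅ := by simpa using hXS
      refine null_mono this fun U s hU => ⟨U, subset_rfl, hU, by simp⟩
    · obtain ⟨f, rfl⟩ := hc.exists_eq_range hne
      refine null_mono (by simpa [sUnion_range] using hXS) (null_iUnion f fun n =>
        nowhereDense_null h𝒰 _ (hS _ ⟨n, rfl⟩))
  · intro h
    exact (null_nowhereDense h𝒰 X h).isMeagre

end UE

/-- ultra-Ellentuck theorem for `FIN_{±k}^[∞]`: `𝒳` has the property of
Baire in the `𝒰`-topology iff `𝒳` is `𝒰`-Ramsey, and `𝒳` is `𝒰`-meager iff `𝒳` is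
`𝒰`-Ramsey null. -/
theorem ultra_Ellentuck (k : ℕ) (hk : 1 ≤ k) (𝒰 : Ultrafilter (ℕ → ℤ))
    (h𝒰 : IsGowersUF k 𝒰) (𝒳 : Set (BlockSeq k)) :
    ((∃ O : Set (BlockSeq k), @IsOpen _ (uTop k 𝒰) O ∧
        @IsMeagre _ (uTop k 𝒰) ((𝒳 \ O) ∪ (O \ 𝒳))) ↔ URamsey k 𝒰 𝒳) ∧
    (@IsMeagre _ (uTop k 𝒰) 𝒳 ↔ URamseyNull k 𝒰 𝒳) := by
  have hc := h𝒰.1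
  refine ⟨⟨?_, ?_⟩, UE.meagre_iff hc 𝒳⟩
  · rintro ⟨O, hO, hm⟩ U s hU
    obtain ⟨V, h1, h2, h3⟩ := UE.open_ramsey hc O hO U s hU
    obtain ⟨W, h4, h5, h6⟩ := (UE.meagre_iff hc _).1 hm V s h2
    refine ⟨W, h4.trans h1, h5, ?_⟩
    rcases h3 with h3 | h3
    · left
      intro P hP
      by_contra hx
      exact h6 hP (Or.inr ⟨h3 (UE.branches_mono h4 hP), hx⟩)
    · right
      intro P hP hx
      exact h6 hP (Or.inl ⟨hx, h3 (UE.branches_mono h4 hP)⟩)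
  · intro hR
    letI := uTop k 𝒰
    refine ⟨interior 𝒳, isOpen_interior, (UE.meagre_iff hc _).2 ?_⟩
    intro U s hU
    obtain ⟨V, h1, h2, h3⟩ := hR U s hU
    refine ⟨V, h1, h2, ?_⟩
    rintro P hP (⟨hx, hi⟩ | ⟨hi, hx⟩)
    · rcases h3 with h3 | h3
      · exact hi (interior_maximal h3 (UE.isOpen_branches h2) hP)
      · exact h3 hP hx
    · exact hx (interior_subset hi)
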